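/- arXiv:2310.07207 — 3 statements merged into one kernel-verified Lean document; each statement's English description precedes it below -/
import Mathlib

section
/- Self-consistency condition for the optimal safety value function (Theorem 1, eq. (15)): for every state x ∈ S, V*(x) = min{ h(x), max_{u∈U} min_{a∈A} V*(f(x, u, a)) }. -/
/-- Closed-loop trajectory: `traj f π μ x t` is the state at time `t` starting from `x`. -/
def traj {S U A : Type*} (f : S → U → A → S) (π : S → U) (μ : S → A) (x : S) : ℕ → S
  | 0 => x
  | t + 1 =>
    let y := traj f π μ x t
    f y (π y) (μ y)

/-- Safety value function for a protagonist policy `π` and an adversary policy `μ`. -/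
noncomputable def Vpm {S U A : Type*} (f : S → U → A → S) (h : S → ℝ)
    (π : S → U) (μ : S → A) (x : S) : ℝ :=
  ⨅ t : ℕ, h (traj f π μ x t)

/-- Safety value function for a protagonist policy `π` (worst-case adversary). -/
noncomputable def Vp {S U A : Type*} (f : S → U → A → S) (h : S → ℝ)
    (π : S → U) (x : S) : ℝ :=
  ⨅ μ : S → A, Vpm f h π μ x

/-- Optimal safety value function. -/
noncomputable def Vstar {S U A : Type*} (f : S → U → A → S) (h : S → ℝ) (x : S) : ℝ :=
  ⨆ π : S → U, Vp f h π x

/-!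
Along any play under a policy `π`, the value `V^π` never decreases: an adversary who does well from
a successor of `x` does at least as well from `x`, by first forcing that successor and then playing
on. A stationary adversary can do so unless the play comes back to `x`, and in that case the rest of
the play already starts at `x`. This gives `≤`. It also shows that `{y | c < V* y}` is controlled
invariant: at `y`, apply the input of any policy, possibly depending on `y`, whose value at `y`
exceeds `c`. Conversely, if `c` is below the right-hand side, adding `x` to this set keeps it
controlled invariant, so a single stationary policy confines the play to it and `c ≤ V* x`. Strict
levels make this work without the supremum over policies being attained.
-/

open Set Function

section Trajectory

variable {S U A : Type*} (f : S → U → A → S) (π : S → U)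

lemma traj_add (μ : S → A) (x : S) (s t : ℕ) :
    traj f π μ x (s + t) = traj f π μ (traj f π μ x s) t := by
  induction t with
  | zero => rfl
  | succ t ih => rw [← add_assoc, traj, traj, ih]

lemma traj_succ_eq_traj_step (μ : S → A) (x : S) (t : ℕ) :
    traj f π μ x (t + 1) = traj f π μ (f x (π x) (μ x)) t := by
  rw [add_comm, traj_add]
  rfl

lemma traj_congr {μ ν : S → A} {x : S} {t : ℕ}
    (hμν : ∀ s < t, μ (traj f π μ x s) = ν (traj f π μ x s)) :
    traj f π μ x t = traj f π ν x t := by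
  induction t with
  | zero => rfl
  | succ t ih =>
    have agree : traj f π μ x t = traj f π ν x t := ih fun s hs => hμν s (by lia)
    simp only [traj, ← agree, hμν t t.lt_succ_self]

lemma exists_traj_eq_traj_step (x : S) (a : A) (μ : S → A) (t : ℕ) :
    ∃ ν s, traj f π ν x s = traj f π μ (f x (π x) a) t := by
  classical
  by_cases returns : ∃ s ≤ t, traj f π μ (f x (π x) a) s = x
  · obtain ⟨s, hst, hs⟩ := returns
    refine ⟨μ, t - s, ?_⟩
    rw [← Nat.add_sub_of_le hst, traj_add, hs, Nat.add_sub_cancel_left]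
  · push Not at returns
    refine ⟨update μ x a, t + 1, ?_⟩
    rw [traj_succ_eq_traj_step, update_self]
    exact (traj_congr f π fun s hs => (update_of_ne (returns s hs.le) a μ).symm).symm

end Trajectory

section PolicyValue

variable {S U A : Type*} [Nonempty A] (f : S → U → A → S) {h : S → ℝ}

lemma le_Vp_iff (h_below : BddBelow (range h)) (π : S → U) (x : S) {c : ℝ} :
    c ≤ Vp f h π x ↔ ∀ μ t, c ≤ h (traj f π μ x t) := by
  have bddBelow_traj (μ : S → A) : BddBelow (range fun t => h (traj f π μ x t)) :=
    h_below.mono (range_comp_subset_range _ h)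
  have bddBelow_Vpm : BddBelow (range fun μ => Vpm f h π μ x) := by
    obtain ⟨b, hb⟩ := h_below
    exact ⟨b, forall_mem_range.2 fun μ => le_ciInf fun t => hb (mem_range_self _)⟩
  exact (le_ciInf_iff bddBelow_Vpm).trans
    (forall_congr' fun μ => le_ciInf_iff (bddBelow_traj μ))

lemma Vp_le_constraint (h_below : BddBelow (range h)) (π : S → U) (x : S) :
    Vp f h π x ≤ h x :=
  (le_Vp_iff f h_below π x).1 le_rfl (fun _ => Classical.arbitrary A) 0

lemma Vp_le_Vp_step (h_below : BddBelow (range h)) (π : S → U) (x : S) (a : A) :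
    Vp f h π x ≤ Vp f h π (f x (π x) a) := by
  refine (le_Vp_iff f h_below π _).2 fun μ t => ?_
  obtain ⟨ν, s, hνs⟩ := exists_traj_eq_traj_step f π x a μ t
  rw [← hνs]
  exact (le_Vp_iff f h_below π x).1 le_rfl ν s

lemma bddAbove_range_Vp (h_below : BddBelow (range h)) (x : S) :
    BddAbove (range fun π => Vp f h π x) :=
  ⟨h x, forall_mem_range.2 fun π => Vp_le_constraint f h_below π x⟩

lemma Vp_le_Vstar (h_below : BddBelow (range h)) (π : S → U) (x : S) :
    Vp f h π x ≤ Vstar f h x :=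
  le_ciSup (bddAbove_range_Vp f h_below x) π

end PolicyValue

section OptimalValue

variable {S U A : Type*} [Nonempty U] [Nonempty A] (f : S → U → A → S) {h : S → ℝ}

lemma Vstar_le_constraint (h_below : BddBelow (range h)) (x : S) :
    Vstar f h x ≤ h x :=
  ciSup_le fun π => Vp_le_constraint f h_below π x

lemma bddBelow_range_Vstar (h_below : BddBelow (range h)) :
    BddBelow (range (Vstar f h)) := by
  have ⟨b, hb⟩ := h_below
  let π : S → U := fun _ => Classical.arbitrary U
  refine ⟨b, forall_mem_range.2 fun x => le_trans ?_ (Vp_le_Vstar f h_below π x)⟩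
  exact (le_Vp_iff f h_below π x).2 fun μ t => hb (mem_range_self _)

lemma bddAbove_range_iInf_Vstar (h_below : BddBelow (range h))
    (h_above : BddAbove (range h)) (x : S) :
    BddAbove (range fun u => ⨅ a, Vstar f h (f x u a)) := by
  obtain ⟨B, hB⟩ := h_above
  refine ⟨B, forall_mem_range.2 fun u => ?_⟩
  let a := Classical.arbitrary A
  calc ⨅ a, Vstar f h (f x u a)
      ≤ Vstar f h (f x u a) :=
        ciInf_le ((bddBelow_range_Vstar f h_below).mono (range_comp_subset_range _ _)) a
    _ ≤ h (f x u a) := Vstar_le_constraint f h_below _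
    _ ≤ B := hB (mem_range_self _)

end OptimalValue

section ControlledInvariance

variable {S U A : Type*}

/-- A set of states is controlled invariant if at each of its states some control input keeps the
successor in the set against every disturbance. Such sets, when contained in `{y | c ≤ h y}`,
certify the lower bound `c` for `V*`. -/
def IsControlledInvariant (f : S → U → A → S) (W : Set S) : Prop :=
  ∀ y ∈ W, ∃ u, ∀ a, f y u a ∈ W

lemma IsControlledInvariant.insert {f : S → U → A → S} {W : Set S}
    (hW : IsControlledInvariant f W) {x : S} {u : U} (hu : ∀ a, f x u a ∈ W) :
    IsControlledInvariant f (insert x W) := by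
  rintro y (rfl | hy)
  · exact ⟨u, fun a => mem_insert_of_mem _ (hu a)⟩
  · obtain ⟨v, hv⟩ := hW y hy
    exact ⟨v, fun a => mem_insert_of_mem _ (hv a)⟩

lemma IsControlledInvariant.exists_policy [Nonempty U] {f : S → U → A → S} {W : Set S}
    (hW : IsControlledInvariant f W) :
    ∃ π : S → U, ∀ μ, ∀ x ∈ W, ∀ t, traj f π μ x t ∈ W := by
  choose! π hπ using hW
  refine ⟨π, fun μ x hx t => ?_⟩
  induction t with
  | zero => exact hx
  | succ t ih => exact hπ _ ih _

lemma IsControlledInvariant.le_Vstar [Nonempty U] [Nonempty A] {f : S → U → A → S} {W : Set S}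
    (hW : IsControlledInvariant f W) {h : S → ℝ} (h_below : BddBelow (range h)) {c : ℝ}
    (hc : ∀ y ∈ W, c ≤ h y) {x : S} (hx : x ∈ W) : c ≤ Vstar f h x := by
  obtain ⟨π, hπ⟩ := hW.exists_policy
  calc c ≤ Vp f h π x := (le_Vp_iff f h_below π x).2 fun μ t => hc _ (hπ μ x hx t)
    _ ≤ Vstar f h x := Vp_le_Vstar f h_below π x

lemma isControlledInvariant_setOf_lt_Vstar [Nonempty U] [Nonempty A] (f : S → U → A → S)
    {h : S → ℝ} (h_below : BddBelow (range h)) (c : ℝ) :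
    IsControlledInvariant f {y | c < Vstar f h y} := by
  intro y hy
  obtain ⟨π, hπ⟩ : ∃ π, c < Vp f h π y := exists_lt_of_lt_ciSup hy
  exact ⟨π y, fun a => hπ.trans_le <|
    (Vp_le_Vp_step f h_below π y a).trans (Vp_le_Vstar f h_below π _)⟩

end ControlledInvariance

section SelfConsistency

variable {S U A : Type*} [Nonempty U] [Nonempty A] (f : S → U → A → S) {h : S → ℝ}

lemma Vstar_le_min_constraint_iSup_iInf (h_below : BddBelow (range h))
    (h_above : BddAbove (range h)) (x : S) :
    Vstar f h x ≤ min (h x) (⨆ u, ⨅ a, Vstar f h (f x u a)) := by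
  refine ciSup_le fun π => le_min (Vp_le_constraint f h_below π x) ?_
  calc Vp f h π x ≤ ⨅ a, Vstar f h (f x (π x) a) :=
        le_ciInf fun a => (Vp_le_Vp_step f h_below π x a).trans (Vp_le_Vstar f h_below π _)
    _ ≤ ⨆ u, ⨅ a, Vstar f h (f x u a) :=
        le_ciSup (bddAbove_range_iInf_Vstar f h_below h_above x) (π x)

lemma min_constraint_iSup_iInf_le_Vstar (h_below : BddBelow (range h)) (x : S) :
    min (h x) (⨆ u, ⨅ a, Vstar f h (f x u a)) ≤ Vstar f h x := by
  refine le_of_forall_lt_imp_le_of_dense fun c hc => ?_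
  obtain ⟨hcx, hc_step⟩ := lt_min_iff.1 hc
  obtain ⟨u, hu⟩ := exists_lt_of_lt_ciSup hc_step
  have step_mem (a : A) : c < Vstar f h (f x u a) := hu.trans_le <|
    ciInf_le ((bddBelow_range_Vstar f h_below).mono (range_comp_subset_range _ _)) a
  have invariant := (isControlledInvariant_setOf_lt_Vstar f h_below c).insert step_mem
  refine invariant.le_Vstar h_below ?_ (mem_insert x _)
  rintro y (rfl | hy)
  · exact hcx.le
  · exact (lt_of_lt_of_le hy (Vstar_le_constraint f h_below y)).le

end SelfConsistency

theorem self_consistency_optimal_general {S U A : Type*} [Nonempty U] [Nonempty A]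
    (f : S → U → A → S) {h : S → ℝ} (h_below : BddBelow (range h)) (h_above : BddAbove (range h))
    (x : S) : Vstar f h x = min (h x) (⨆ u : U, ⨅ a : A, Vstar f h (f x u a)) :=
  le_antisymm (Vstar_le_min_constraint_iSup_iInf f h_below h_above x)
    (min_constraint_iSup_iInf_le_Vstar f h_below x)

theorem self_consistency_optimal {S U A : Type*} [Fintype S] [Nonempty S] [Fintype U] [Nonempty U] [Fintype A] [Nonempty A]
    (f : S → U → A → S) (h : S → ℝ) (x : S) :
    Vstar f h x = min (h x) (⨆ u : U, ⨅ a : A, Vstar f h (f x u a)) :=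
  self_consistency_optimal_general f (finite_range h).bddBelow (finite_range h).bddAbove x
end

section
/- Approximation by the discounted fixed point, protagonist case (Proposition 1 for T^π): fix a feedback policy π : S → U. For every γ ∈ (0,1), the operator T^π (with discount γ) has a unique fixed point V_γ : S → ℝ, and for every x ∈ S, V_γ(x) tends to V^π(x) as γ tends to 1 from within (0,1). -/
/-- Safety self-consistency operator for fixed protagonist `π` and adversary `μ`. -/
noncomputable def Tpm {S U A : Type*} (γ : ℝ) (f : S → U → A → S) (h : S → ℝ)
    (π : S → U) (μ : S → A) (V : S → ℝ) (x : S) : ℝ :=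
  (1 - γ) * h x + γ * min (h x) (V (f x (π x) (μ x)))

/-- Safety self-consistency operator for fixed protagonist `π` (worst-case adversary). -/
noncomputable def Tp {S U A : Type*} (γ : ℝ) (f : S → U → A → S) (h : S → ℝ)
    (π : S → U) (V : S → ℝ) (x : S) : ℝ :=
  (1 - γ) * h x + γ * min (h x) (⨅ a : A, V (f x (π x) a))

/-- Optimal safety self-consistency operator. -/
noncomputable def Topt {S U A : Type*} (γ : ℝ) (f : S → U → A → S) (h : S → ℝ)
    (V : S → ℝ) (x : S) : ℝ :=
  (1 - γ) * h x + γ * min (h x) (⨆ u : U, ⨅ a : A, V (f x u a))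

/-!
For a fixed adversary `μ`, unfolding `V ≤ T^{π,μ} V` for `t` steps bounds `V x` by a discounted sum
which tends to `h x_t` as `γ → 1`; minimising over `μ` and `t` gives `limsup V_γ x ≤ V^π x`.
Conversely `V^π ≤ V_γ` for every `γ`: an adversary that is nearly greedy for `V_γ` turns `V_γ + δ`
into a supersolution of `T^{π,μ}`, and every supersolution dominates `V^{π,μ}`. The fixed
point exists by Knaster–Tarski on the functions between `inf h` and `h`, and it is unique because a
bound on the gap between two fixed points improves by the factor `γ`.
-/

open Filter Topology

section RealInequalities

theorem discounted_min_le_add {γ a b c d : ℝ} (hγ : 0 ≤ γ) (hd : 0 ≤ d) (hbc : b ≤ c + d) :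
    (1 - γ) * a + γ * min a b ≤ (1 - γ) * a + γ * min a c + γ * d := by
  have hmin : min a b ≤ min a c + d := by
    rw [← min_add_add_right]
    exact min_le_min (le_add_of_nonneg_right hd) hbc
  linarith [mul_le_mul_of_nonneg_left hmin hγ]

theorem le_discounted_min {γ a b m : ℝ} (hγ₀ : 0 ≤ γ) (hγ₁ : γ ≤ 1) (ha : m ≤ a) (hb : m ≤ b) :
    m ≤ (1 - γ) * a + γ * min a b := by
  have h₁ := mul_le_mul_of_nonneg_left ha (sub_nonneg.2 hγ₁)
  have h₂ := mul_le_mul_of_nonneg_left (le_min ha hb) hγ₀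
  linarith

theorem le_of_forall_le_add_imp_le_add_mul {ι : Type*} {u v : ι → ℝ} {γ : ℝ} (hγ₀ : 0 ≤ γ)
    (hγ₁ : γ < 1) (hbdd : BddAbove (Set.range (u - v)))
    (hstep : ∀ d, 0 ≤ d → (∀ i, u i ≤ v i + d) → ∀ i, u i ≤ v i + γ * d) : u ≤ v := by
  obtain ⟨D, hD⟩ := hbdd
  have hpow : ∀ n : ℕ, ∀ i, u i ≤ v i + γ ^ n * max D 0 := by
    intro n
    induction n with
    | zero =>
      intro i
      have hi : u i - v i ≤ D := hD ⟨i, rfl⟩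
      linarith [le_max_left D 0]
    | succ n ih =>
      rw [pow_succ', mul_assoc]
      exact hstep _ (by positivity) ih
  have hlim : Tendsto (fun n : ℕ => γ ^ n * max D 0) atTop (𝓝 0) := by
    simpa using (tendsto_pow_atTop_nhds_zero_of_lt_one hγ₀ hγ₁).mul_const (max D 0)
  intro i
  have hlim_i := hlim.const_add (v i)
  rw [add_zero] at hlim_i
  exact ge_of_tendsto' hlim_i fun n => hpow n i

end RealInequalities

section StoppedDiscountedSum

/-- The value of a stream `c` discounted at rate `γ` and frozen at time `t`: the weights
`(1 - γ) * γ ^ s` for `s < t` and `γ ^ t` for the final term add up to one. It is the `t`-fold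
unfolding of `V x ≤ (1 - γ) * h x + γ * V x'`. -/
def stoppedDiscountedSum (γ : ℝ) (c : ℕ → ℝ) (t : ℕ) : ℝ :=
  (1 - γ) * ∑ s ∈ Finset.range t, γ ^ s * c s + γ ^ t * c t

theorem tendsto_stoppedDiscountedSum (c : ℕ → ℝ) (t : ℕ) :
    Tendsto (fun γ => stoppedDiscountedSum γ c t) (𝓝 1) (𝓝 (c t)) := by
  have hcont : Continuous fun γ => stoppedDiscountedSum γ c t := by
    unfold stoppedDiscountedSum
    fun_prop
  simpa [stoppedDiscountedSum] using hcont.tendsto 1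

theorem le_stoppedDiscountedSum {γ : ℝ} {c v : ℕ → ℝ} (hγ : 0 ≤ γ) (hvc : ∀ t, v t ≤ c t)
    (hstep : ∀ t, v t ≤ (1 - γ) * c t + γ * v (t + 1)) (t : ℕ) :
    v 0 ≤ stoppedDiscountedSum γ c t := by
  have hunfold : v 0 ≤ (1 - γ) * ∑ s ∈ Finset.range t, γ ^ s * c s + γ ^ t * v t := by
    induction t with
    | zero => simp
    | succ t ih =>
      rw [Finset.sum_range_succ, pow_succ]
      linarith [mul_le_mul_of_nonneg_left (hstep t) (pow_nonneg hγ t)]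
  exact hunfold.trans (by unfold stoppedDiscountedSum; gcongr; exact hvc t)

end StoppedDiscountedSum

section SafetyOperators

variable {S U A : Type*} {f : S → U → A → S} {h : S → ℝ} {π : S → U} {μ : S → A} {γ : ℝ}
  {V W : S → ℝ}

theorem Tpm_le (hγ : 0 ≤ γ) (V : S → ℝ) (x : S) : Tpm γ f h π μ V x ≤ h x := by
  unfold Tpm
  linarith [mul_le_mul_of_nonneg_left (min_le_left (h x) (V (f x (π x) (μ x)))) hγ]

theorem Tp_le (hγ : 0 ≤ γ) (V : S → ℝ) (x : S) : Tp γ f h π V x ≤ h x := by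
  unfold Tp
  linarith [mul_le_mul_of_nonneg_left (min_le_left (h x) (⨅ a, V (f x (π x) a))) hγ]

theorem Tp_le_Tpm (hγ : 0 ≤ γ) (hV : BddBelow (Set.range V)) (μ : S → A) :
    Tp γ f h π V ≤ Tpm γ f h π μ V := by
  intro x
  have hinf : ⨅ a, V (f x (π x) a) ≤ V (f x (π x) (μ x)) :=
    ciInf_le (hV.mono (Set.range_comp_subset_range _ V)) (μ x)
  unfold Tp Tpm
  gcongr

theorem Tp_le_Tp_add [Nonempty A] {d : ℝ} (hγ : 0 ≤ γ) (hV : BddBelow (Set.range V)) (hd : 0 ≤ d)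
    (hVW : ∀ y, V y ≤ W y + d) (x : S) : Tp γ f h π V x ≤ Tp γ f h π W x + γ * d := by
  refine discounted_min_le_add hγ hd (sub_le_iff_le_add.1 (le_ciInf fun a => ?_))
  exact sub_le_iff_le_add.2 <|
    (ciInf_le (hV.mono (Set.range_comp_subset_range _ V)) a).trans (hVW _)

theorem Tp_le_Tp [Nonempty A] (hγ : 0 ≤ γ) (hV : BddBelow (Set.range V)) (hVW : V ≤ W) :
    Tp γ f h π V ≤ Tp γ f h π W := by
  intro x
  simpa using Tp_le_Tp_add hγ hV le_rfl (fun y => by simpa using hVW y) x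

theorem le_of_le_Tp_of_Tp_le [Nonempty A] (hγ₀ : 0 ≤ γ) (hγ₁ : γ < 1)
    (hh : BddAbove (Set.range h)) (hVb : BddBelow (Set.range V)) (hWb : BddBelow (Set.range W))
    (hV : V ≤ Tp γ f h π V) (hW : Tp γ f h π W ≤ W) : V ≤ W := by
  refine le_of_forall_le_add_imp_le_add_mul hγ₀ hγ₁ ?_ fun d hd hVW x => ?_
  · obtain ⟨M, hM⟩ := hh
    obtain ⟨m, hm⟩ := hWb
    exact ⟨M - m, Set.forall_mem_range.2 fun x =>
      sub_le_sub (((hV x).trans (Tp_le hγ₀ V x)).trans (hM ⟨x, rfl⟩)) (hm ⟨x, rfl⟩)⟩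
  · calc V x ≤ Tp γ f h π V x := hV x
      _ ≤ Tp γ f h π W x + γ * d := Tp_le_Tp_add hγ₀ hVb hd hVW x
      _ ≤ W x + γ * d := by gcongr; exact hW x

theorem exists_bddBelow_Tp_eq [Nonempty A] (f : S → U → A → S) (π : S → U) (hγ₀ : 0 ≤ γ)
    (hγ₁ : γ ≤ 1) (hh : BddBelow (Set.range h)) :
    ∃ W : S → ℝ, BddBelow (Set.range W) ∧ Tp γ f h π W = W := by
  obtain ⟨m, hm⟩ := hh
  have hmh : (fun _ => m) ≤ h := fun x => hm ⟨x, rfl⟩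
  have bddBelow_of_mem (V : Set.Icc (fun _ => m) h) : BddBelow (Set.range V.1) :=
    ⟨m, Set.forall_mem_range.2 V.2.1⟩
  have mapsTo (V : Set.Icc (fun _ => m) h) : Tp γ f h π V.1 ∈ Set.Icc (fun _ => m) h :=
    ⟨fun x => le_discounted_min hγ₀ hγ₁ (hmh x) (le_ciInf fun _ => V.2.1 _), Tp_le hγ₀ V.1⟩
  have : Fact ((fun _ => m) ≤ h) := ⟨hmh⟩
  let T : Set.Icc (fun _ => m) h →o Set.Icc (fun _ => m) h :=
    ⟨fun V => ⟨Tp γ f h π V.1, mapsTo V⟩, fun V _ hVW => Tp_le_Tp hγ₀ (bddBelow_of_mem V) hVW⟩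
  exact ⟨T.lfp.1, bddBelow_of_mem T.lfp, congrArg Subtype.val T.map_lfp⟩

theorem existsUnique_bddBelow_Tp_eq [Nonempty A] (f : S → U → A → S) (π : S → U) (hγ₀ : 0 ≤ γ)
    (hγ₁ : γ < 1) (hh : BddBelow (Set.range h)) (hh' : BddAbove (Set.range h)) :
    ∃! W : S → ℝ, BddBelow (Set.range W) ∧ Tp γ f h π W = W := by
  obtain ⟨W, hWb, hW⟩ := exists_bddBelow_Tp_eq f π hγ₀ hγ₁.le hh
  refine ⟨W, ⟨hWb, hW⟩, fun V ⟨hVb, hV⟩ => le_antisymm ?_ ?_⟩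
  · exact le_of_le_Tp_of_Tp_le hγ₀ hγ₁ hh' hVb hWb hV.ge hW.le
  · exact le_of_le_Tp_of_Tp_le hγ₀ hγ₁ hh' hWb hVb hW.ge hV.le

theorem le_stoppedDiscountedSum_of_le_Tpm (hγ : 0 ≤ γ) (hV : V ≤ Tpm γ f h π μ V) (x : S)
    (t : ℕ) : V x ≤ stoppedDiscountedSum γ (fun s => h (traj f π μ x s)) t := by
  refine le_stoppedDiscountedSum (v := fun s => V (traj f π μ x s)) hγ
    (fun s => (hV _).trans (Tpm_le hγ V _)) (fun s => (hV _).trans ?_) t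
  unfold Tpm
  gcongr
  exact min_le_right _ _

theorem Vpm_le_of_Tpm_le (hγ₀ : 0 ≤ γ) (hγ₁ : γ < 1) (hh : BddBelow (Set.range h))
    (hWb : BddBelow (Set.range W)) (hW : Tpm γ f h π μ W ≤ W) (x : S) :
    Vpm f h π μ x ≤ W x := by
  have hinf (t : ℕ) : Vpm f h π μ x ≤ h (traj f π μ x t) :=
    ciInf_le (hh.mono (Set.range_comp_subset_range _ h)) t
  suffices hle : (fun _ => Vpm f h π μ x) ≤ fun t => W (traj f π μ x t) from hle 0
  refine le_of_forall_le_add_imp_le_add_mul hγ₀ hγ₁ ?_ fun d hd hle t => ?_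
  · obtain ⟨m, hm⟩ := hWb
    exact ⟨Vpm f h π μ x - m, Set.forall_mem_range.2 fun t => sub_le_sub_left (hm ⟨_, rfl⟩) _⟩
  · set y := traj f π μ x t
    calc Vpm f h π μ x
        ≤ (1 - γ) * h y + γ * min (h y) (W (f y (π y) (μ y)) + d) :=
          le_discounted_min hγ₀ hγ₁.le (hinf t) (hle (t + 1))
      _ ≤ Tpm γ f h π μ W y + γ * d := discounted_min_le_add hγ₀ hd le_rfl
      _ ≤ W y + γ * d := by gcongr; exact hW y

theorem exists_Tpm_add_const_le [Nonempty A] (hγ₀ : 0 ≤ γ) (hγ₁ : γ < 1)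
    (hW : Tp γ f h π W ≤ W) {δ : ℝ} (hδ : 0 < δ) :
    ∃ μ : S → A, Tpm γ f h π μ (fun y => W y + δ) ≤ fun y => W y + δ := by
  -- The slack `ε = (1 - γ) δ` is small enough that `γ (ε + δ) ≤ δ`.
  have hε : 0 < (1 - γ) * δ := mul_pos (sub_pos.2 hγ₁) hδ
  choose μ hμ using fun y => exists_lt_of_ciInf_lt
    (lt_add_of_pos_right (⨅ a, W (f y (π y) a)) hε)
  refine ⟨μ, fun y => ?_⟩
  calc Tpm γ f h π μ (fun y => W y + δ) y
      ≤ Tp γ f h π W y + γ * ((1 - γ) * δ + δ) :=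
        discounted_min_le_add hγ₀ (by positivity) (by linarith [hμ y])
    _ ≤ W y + δ := by nlinarith [hW y, mul_nonneg (sq_nonneg (1 - γ)) hδ.le]

theorem bddBelow_range_Vpm (hh : BddBelow (Set.range h)) (x : S) :
    BddBelow (Set.range fun μ : S → A => Vpm f h π μ x) := by
  obtain ⟨m, hm⟩ := hh
  exact ⟨m, Set.forall_mem_range.2 fun μ => le_ciInf fun t => hm ⟨_, rfl⟩⟩

theorem Vp_le_of_Tp_le [Nonempty A] (hγ₀ : 0 ≤ γ) (hγ₁ : γ < 1) (hh : BddBelow (Set.range h))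
    (hWb : BddBelow (Set.range W)) (hW : Tp γ f h π W ≤ W) (x : S) : Vp f h π x ≤ W x := by
  refine le_of_forall_pos_le_add fun δ hδ => ?_
  obtain ⟨μ, hμ⟩ := exists_Tpm_add_const_le hγ₀ hγ₁ hW hδ
  have hWδ : BddBelow (Set.range fun y => W y + δ) :=
    hWb.range_mono _ fun y => le_add_of_nonneg_right hδ.le
  exact (ciInf_le (bddBelow_range_Vpm hh x) μ).trans (Vpm_le_of_Tpm_le hγ₀ hγ₁ hh hWδ hμ x)

theorem exists_traj_lt_of_Vp_lt [Nonempty A] {x : S} {b : ℝ} (hb : Vp f h π x < b) :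
    ∃ (μ : S → A) (t : ℕ), h (traj f π μ x t) < b := by
  obtain ⟨μ, hμ⟩ := exists_lt_of_ciInf_lt hb
  exact ⟨μ, exists_lt_of_ciInf_lt hμ⟩

theorem tendsto_Vp_of_Tp_eq [Nonempty A] {Vγ : ℝ → S → ℝ}
    (hVb : ∀ γ ∈ Set.Ioo (0 : ℝ) 1, BddBelow (Set.range (Vγ γ)))
    (hV : ∀ γ ∈ Set.Ioo (0 : ℝ) 1, Tp γ f h π (Vγ γ) = Vγ γ) (x : S) :
    Tendsto (fun γ => Vγ γ x) (𝓝[Set.Ioo 0 1] 1) (𝓝 (Vp f h π x)) := by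
  refine tendsto_order.2 ⟨fun b hb => ?_, fun b hb => ?_⟩
  · filter_upwards [self_mem_nhdsWithin] with γ hγ
    have hh : BddBelow (Set.range h) :=
      (hVb γ hγ).range_mono _ fun y => ((hV γ hγ).ge y).trans (Tp_le hγ.1.le _ y)
    exact hb.trans_le (Vp_le_of_Tp_le hγ.1.le hγ.2 hh (hVb γ hγ) (hV γ hγ).le x)
  · obtain ⟨μ, t, ht⟩ := exists_traj_lt_of_Vp_lt hb
    have hsum : ∀ᶠ γ in 𝓝 1, stoppedDiscountedSum γ (fun s => h (traj f π μ x s)) t < b :=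
      (tendsto_stoppedDiscountedSum _ t).eventually_lt_const ht
    filter_upwards [self_mem_nhdsWithin, nhdsWithin_le_nhds hsum] with γ hγ hlt
    have hsub : Vγ γ ≤ Tpm γ f h π μ (Vγ γ) :=
      (hV γ hγ).ge.trans (Tp_le_Tpm hγ.1.le (hVb γ hγ) μ)
    exact (le_stoppedDiscountedSum_of_le_Tpm hγ.1.le hsub x t).trans_lt hlt

end SafetyOperators

theorem discounted_approximation_protagonist_general {S U A : Type*} [Nonempty A]
    (f : S → U → A → S) {h : S → ℝ} (hbelow : BddBelow (Set.range h))
    (habove : BddAbove (Set.range h)) (π : S → U) :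
    (∀ γ ∈ Set.Ioo (0 : ℝ) 1, ∃! W : S → ℝ, BddBelow (Set.range W) ∧ Tp γ f h π W = W) ∧
    (∀ Vγ : ℝ → S → ℝ,
      (∀ γ ∈ Set.Ioo (0 : ℝ) 1, BddBelow (Set.range (Vγ γ)) ∧ Tp γ f h π (Vγ γ) = Vγ γ) →
      ∀ x : S, Tendsto (fun γ => Vγ γ x) (𝓝[Set.Ioo 0 1] 1) (𝓝 (Vp f h π x))) :=
  ⟨fun _ hγ => existsUnique_bddBelow_Tp_eq f π hγ.1.le hγ.2 hbelow habove,
    fun _ hV => tendsto_Vp_of_Tp_eq (fun γ hγ => (hV γ hγ).1) fun γ hγ => (hV γ hγ).2⟩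

theorem discounted_approximation_protagonist {S U A : Type*} [Fintype S] [Nonempty S] [Fintype U] [Nonempty U] [Fintype A] [Nonempty A]
    (f : S → U → A → S) (h : S → ℝ)
    (π : S → U) :
    (∀ γ ∈ Set.Ioo (0 : ℝ) 1, ∃! W : S → ℝ, Tp γ f h π W = W) ∧
    (∀ Vγ : ℝ → S → ℝ, (∀ γ ∈ Set.Ioo (0 : ℝ) 1, Tp γ f h π (Vγ γ) = Vγ γ) →
      ∀ x : S, Filter.Tendsto (fun γ => Vγ γ x) (nhdsWithin 1 (Set.Ioo (0 : ℝ) 1))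
        (nhds (Vp f h π x))) := by
  have hbelow (W : S → ℝ) : BddBelow (Set.range W) := (Set.finite_range W).bddBelow
  simpa only [hbelow, true_and] using
    discounted_approximation_protagonist_general f (hbelow h) (Set.finite_range h).bddAbove π
end

section
/- Monotone convergence of policy iteration for robust invariant sets (Theorem 3): let (π_k)_{k∈ℕ} be a sequence of feedback policies S → U and (V_k)_{k∈ℕ} a sequence of functions S → ℝ such that for every k, T^{π_k}(V_k) = V_k (policy evaluation) and T^{π_{k+1}}(V_k) = T(V_k) (greedy policy improvement). Then the sequence (V_k) is pointwise nondecreasing in k, and for every x ∈ S, V_k(x) converges as k → ∞ to V*(x), where V* is the unique fixed point of T. -/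
/-!
Blackwell's conditions (`V ≤ W + c` implies `T V ≤ T W + γ c`) yield one iteration estimate: if
`V ≤ T V` and `T (W k) ≤ W (k + 1)`, then `V ≤ W 0 + c` improves to `V ≤ W k + γ ^ k * c`. For a
constant sequence `W` this is the comparison principle, which gives `V k ≤ V (k + 1)` and
`V k ≤ V*`; with `W k = V k` and `V = V*` it gives geometric convergence from below.
-/

section Discounting

open Set Filter Topology Bornology

variable {S : Type*} {γ : ℝ} {T : (S → ℝ) → S → ℝ} {V W : S → ℝ}

/-- Blackwell's monotonicity and discounting conditions on bounded functions, merged into one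
inequality; the case `c = 0` is monotonicity. -/
def IsDiscounted (γ : ℝ) (T : (S → ℝ) → S → ℝ) : Prop :=
  ∀ ⦃V W : S → ℝ⦄, IsBounded (range V) → IsBounded (range W) → ∀ ⦃c : ℝ⦄, 0 ≤ c →
    (∀ x, V x ≤ W x + c) → ∀ x, T V x ≤ T W x + γ * c

theorem IsDiscounted.monotone (hT : IsDiscounted γ T) (hV : IsBounded (range V))
    (hW : IsBounded (range W)) (hVW : V ≤ W) : T V ≤ T W := fun x => by
  simpa using hT hV hW le_rfl (fun y => by simpa using hVW y) x

theorem exists_nonneg_forall_le_add (hV : BddAbove (range V)) (hW : BddBelow (range W)) :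
    ∃ c, 0 ≤ c ∧ ∀ x, V x ≤ W x + c := by
  obtain ⟨M, hM⟩ := hV
  obtain ⟨m, hm⟩ := hW
  refine ⟨max 0 (M - m), le_max_left _ _, fun x => ?_⟩
  linarith [hM (mem_range_self x), hm (mem_range_self x), le_max_right 0 (M - m)]

theorem IsDiscounted.le_add_pow_mul (hT : IsDiscounted γ T) (hγ : 0 ≤ γ) {W : ℕ → S → ℝ} {c : ℝ}
    (hV : IsBounded (range V)) (hW : ∀ k, IsBounded (range (W k))) (hVT : V ≤ T V)
    (hTW : ∀ k, T (W k) ≤ W (k + 1)) (hc : 0 ≤ c) (hVW : ∀ x, V x ≤ W 0 x + c) (k : ℕ) (x : S) :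
    V x ≤ W k x + γ ^ k * c := by
  induction k generalizing x with
  | zero => simpa using hVW x
  | succ k ih =>
    calc V x ≤ T V x := hVT x
      _ ≤ T (W k) x + γ * (γ ^ k * c) := hT hV (hW k) (by positivity) ih x
      _ ≤ W (k + 1) x + γ ^ (k + 1) * c := by
        rw [pow_succ', mul_assoc]
        gcongr
        exact hTW k x

theorem tendsto_pow_mul_const_nhds_zero (hγ₀ : 0 ≤ γ) (hγ₁ : γ < 1) (c : ℝ) :
    Tendsto (fun k : ℕ => γ ^ k * c) atTop (𝓝 0) := by
  simpa using (tendsto_pow_atTop_nhds_zero_of_lt_one hγ₀ hγ₁).mul_const c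

theorem IsDiscounted.le_of_le_apply_of_apply_le (hT : IsDiscounted γ T) (hγ₀ : 0 ≤ γ)
    (hγ₁ : γ < 1) (hV : IsBounded (range V)) (hW : IsBounded (range W)) (hVT : V ≤ T V)
    (hTW : T W ≤ W) : V ≤ W := by
  obtain ⟨c, hc, hVW⟩ := exists_nonneg_forall_le_add hV.bddAbove hW.bddBelow
  intro x
  have hlim : Tendsto (fun k : ℕ => W x + γ ^ k * c) atTop (𝓝 (W x)) := by
    simpa using (tendsto_pow_mul_const_nhds_zero hγ₀ hγ₁ c).const_add (W x)
  exact ge_of_tendsto' hlim fun k =>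
    hT.le_add_pow_mul hγ₀ hV (fun _ => hW) hVT (fun _ => hTW) hc hVW k x

theorem IsDiscounted.tendstoUniformly (hT : IsDiscounted γ T) (hγ₀ : 0 ≤ γ) (hγ₁ : γ < 1)
    {W : ℕ → S → ℝ} (hV : IsBounded (range V)) (hW : ∀ k, IsBounded (range (W k)))
    (hVT : V ≤ T V) (hTW : ∀ k, T (W k) ≤ W (k + 1)) (hWV : ∀ k, W k ≤ V) :
    TendstoUniformly W V atTop := by
  obtain ⟨c, hc, hVW⟩ := exists_nonneg_forall_le_add hV.bddAbove (hW 0).bddBelow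
  rw [Metric.tendstoUniformly_iff]
  intro ε hε
  filter_upwards [(tendsto_pow_mul_const_nhds_zero hγ₀ hγ₁ c).eventually_lt_const hε] with k hk x
  rw [Real.dist_eq, abs_of_nonneg (sub_nonneg.2 (hWV k x))]
  linarith [hT.le_add_pow_mul hγ₀ hV hW hVT hTW hc hVW k x]

end Discounting

section SafetyOperators

open Set Filter Bornology

/-- The one-step update shared by `Tp` and `Topt`: the present constraint value `b`, averaged with
the worse of `b` and the continuation value `v`. -/
noncomputable def safetyBackup (γ b v : ℝ) : ℝ :=
  (1 - γ) * b + γ * min b v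

theorem safetyBackup_monotone {γ : ℝ} (hγ : 0 ≤ γ) (b : ℝ) : Monotone (safetyBackup γ b) := by
  intro v w hvw
  unfold safetyBackup
  gcongr

theorem safetyBackup_le_add {γ b v w c : ℝ} (hγ : 0 ≤ γ) (hc : 0 ≤ c) (hvw : v ≤ w + c) :
    safetyBackup γ b v ≤ safetyBackup γ b w + γ * c := by
  have hmin : min b v ≤ min b w + c := by
    rw [← min_add_add_right]
    exact min_le_min (le_add_of_nonneg_right hc) hvw
  calc safetyBackup γ b v ≤ (1 - γ) * b + γ * (min b w + c) := by
        unfold safetyBackup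
        gcongr
    _ = safetyBackup γ b w + γ * c := by
        unfold safetyBackup
        ring

variable {S U A : Type*} {γ : ℝ} {f : S → U → A → S} {h : S → ℝ} {V W : S → ℝ}

/-- The value of `V` after playing `u` at `x` against the worst disturbance. It is a genuine
infimum only if `A` is nonempty and `V` is bounded below. -/
noncomputable def worstCaseValue (f : S → U → A → S) (V : S → ℝ) (x : S) (u : U) : ℝ :=
  ⨅ a, V (f x u a)

theorem Tp_apply (π : S → U) (x : S) :
    Tp γ f h π V x = safetyBackup γ (h x) (worstCaseValue f V x (π x)) := rfl

theorem Topt_apply (x : S) :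
    Topt γ f h V x = safetyBackup γ (h x) (⨆ u, worstCaseValue f V x u) := rfl

theorem bddBelow_range_successor_value (hV : BddBelow (range V)) (x : S) (u : U) :
    BddBelow (range fun a => V (f x u a)) :=
  hV.mono (range_comp_subset_range (f x u) V)

variable [Nonempty A]

theorem worstCaseValue_le_add (hV : BddBelow (range V)) (hW : BddBelow (range W)) {c : ℝ}
    (hVW : ∀ y, V y ≤ W y + c) (x : S) (u : U) :
    worstCaseValue f V x u ≤ worstCaseValue f W x u + c :=
  calc worstCaseValue f V x u ≤ ⨅ a, (W (f x u a) + c) :=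
        ciInf_mono (bddBelow_range_successor_value hV x u) fun _ => hVW _
    _ = worstCaseValue f W x u + c := (ciInf_add (bddBelow_range_successor_value hW x u) c).symm

theorem bddAbove_range_worstCaseValue (hV : IsBounded (range V)) (x : S) :
    BddAbove (range (worstCaseValue f V x)) := by
  obtain ⟨M, hM⟩ := hV.bddAbove
  refine ⟨M, forall_mem_range.2 fun u => ?_⟩
  exact ciInf_le_of_le (bddBelow_range_successor_value hV.bddBelow x u) (Classical.arbitrary A)
    (hM (mem_range_self _))

theorem isDiscounted_Tp (hγ : 0 ≤ γ) (π : S → U) : IsDiscounted γ (Tp γ f h π) := by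
  intro V W hV hW c hc hVW x
  rw [Tp_apply, Tp_apply]
  exact safetyBackup_le_add hγ hc
    (worstCaseValue_le_add hV.bddBelow hW.bddBelow hVW x (π x))

theorem isDiscounted_Topt [Nonempty U] (hγ : 0 ≤ γ) : IsDiscounted γ (Topt γ f h) := by
  intro V W hV hW c hc hVW x
  rw [Topt_apply, Topt_apply]
  refine safetyBackup_le_add hγ hc (ciSup_le fun u => ?_)
  calc worstCaseValue f V x u ≤ worstCaseValue f W x u + c :=
        worstCaseValue_le_add hV.bddBelow hW.bddBelow hVW x u
    _ ≤ (⨆ u, worstCaseValue f W x u) + c := by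
        gcongr
        exact le_ciSup (bddAbove_range_worstCaseValue hW x) u

theorem Tp_le_Topt (hγ : 0 ≤ γ) (hV : IsBounded (range V)) (π : S → U) :
    Tp γ f h π V ≤ Topt γ f h V := by
  intro x
  rw [Tp_apply, Topt_apply]
  exact safetyBackup_monotone hγ (h x) (le_ciSup (bddAbove_range_worstCaseValue hV x) (π x))

theorem le_Topt_of_Tp_eq (hγ : 0 ≤ γ) (hV : IsBounded (range V)) {π : S → U}
    (heval : Tp γ f h π V = V) : V ≤ Topt γ f h V :=
  heval.symm.trans_le (Tp_le_Topt hγ hV π)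

theorem le_of_greedy_improvement (hγ₀ : 0 ≤ γ) (hγ₁ : γ < 1) (hV : IsBounded (range V))
    (hW : IsBounded (range W)) {π π' : S → U} (hπ : Tp γ f h π V = V) (hπ' : Tp γ f h π' W = W)
    (himp : Tp γ f h π' V = Topt γ f h V) : V ≤ W :=
  (isDiscounted_Tp hγ₀ π').le_of_le_apply_of_apply_le hγ₀ hγ₁ hV hW
    ((le_Topt_of_Tp_eq hγ₀ hV hπ).trans_eq himp.symm) hπ'.le

theorem policy_iteration_monotone_convergence_general [Nonempty U] (hγ₀ : 0 ≤ γ) (hγ₁ : γ < 1)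
    {πseq : ℕ → S → U} {Vseq : ℕ → S → ℝ} {Vst : S → ℝ}
    (hbdd : ∀ k, IsBounded (range (Vseq k))) (hbdd_st : IsBounded (range Vst))
    (heval : ∀ k, Tp γ f h (πseq k) (Vseq k) = Vseq k)
    (himp : ∀ k, Tp γ f h (πseq (k + 1)) (Vseq k) = Topt γ f h (Vseq k))
    (hfix : Topt γ f h Vst = Vst) :
    Monotone Vseq ∧ TendstoUniformly Vseq Vst atTop := by
  have hT : IsDiscounted γ (Topt γ f h) := isDiscounted_Topt hγ₀
  have hstep (k : ℕ) : Vseq k ≤ Vseq (k + 1) :=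
    le_of_greedy_improvement hγ₀ hγ₁ (hbdd k) (hbdd (k + 1)) (heval k) (heval (k + 1)) (himp k)
  have hnext (k : ℕ) : Topt γ f h (Vseq k) ≤ Vseq (k + 1) :=
    calc Topt γ f h (Vseq k) = Tp γ f h (πseq (k + 1)) (Vseq k) := (himp k).symm
      _ ≤ Tp γ f h (πseq (k + 1)) (Vseq (k + 1)) :=
        (isDiscounted_Tp hγ₀ _).monotone (hbdd k) (hbdd (k + 1)) (hstep k)
      _ = Vseq (k + 1) := heval (k + 1)
  have hle (k : ℕ) : Vseq k ≤ Vst :=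
    hT.le_of_le_apply_of_apply_le hγ₀ hγ₁ (hbdd k) hbdd_st
      (le_Topt_of_Tp_eq hγ₀ (hbdd k) (heval k)) hfix.le
  exact ⟨monotone_nat_of_le_succ hstep,
    hT.tendstoUniformly hγ₀ hγ₁ hbdd_st hbdd hfix.ge hnext hle⟩

end SafetyOperators

theorem policy_iteration_monotone_convergence {S U A : Type*} [Fintype S] [Nonempty S] [Fintype U] [Nonempty U] [Fintype A] [Nonempty A]
    (f : S → U → A → S) (h : S → ℝ)
    {γ : ℝ} (hγ : γ ∈ Set.Ioo (0 : ℝ) 1)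
    (πseq : ℕ → S → U) (Vseq : ℕ → S → ℝ)
    (heval : ∀ k, Tp γ f h (πseq k) (Vseq k) = Vseq k)
    (himp : ∀ k, Tp γ f h (πseq (k + 1)) (Vseq k) = Topt γ f h (Vseq k))
    (Vst : S → ℝ) (hfix : Topt γ f h Vst = Vst)
    (huniq : ∀ W : S → ℝ, Topt γ f h W = W → W = Vst) :
    (∀ x : S, Monotone fun k => Vseq k x) ∧
    (∀ x : S, Filter.Tendsto (fun k => Vseq k x) Filter.atTop (nhds (Vst x))) := by
  obtain ⟨hmono, hunif⟩ := policy_iteration_monotone_convergence_general hγ.1.le hγ.2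
    (fun k => (Set.finite_range (Vseq k)).isBounded) (Set.finite_range Vst).isBounded
    heval himp hfix
  exact ⟨fun x _ _ hkl => hmono hkl x, fun x => hunif.tendsto_at x⟩
end
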